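/- Let −1 < k < 0 and for each n let X_1,…,X_n be i.i.d. random variables from the Generalized Pareto distribution with shape k and scale 1, and let τ_n = X̄_n / X_(n). Then for every t > 0, P( n^{−k} · τ_n ≤ t ) converges, as n → ∞, to 1 − exp( − ( t·(k+1)/(−k) )^{−1/k} ); that is, n^{−k}·τ_n converges in distribution to a Weibull random variable with shape parameter −1/k and scale parameter −k/(k+1). -/

import Mathlib

open MeasureTheory ProbabilityTheory Filter

/-- The density of the Generalized Pareto distribution with shape `k` and scale `1`:
`(1 − k·x)^{(1−k)/k}` on `[0, 1/k]` for `k > 0`, on `[0, ∞)` for `k < 0`, and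
the `Exponential(1)` density `e^{−x}` for `k = 0`. -/
noncomputable def gpdPdf (k x : ℝ) : ℝ :=
  if k = 0 then (if 0 ≤ x then Real.exp (-x) else 0)
  else if 0 ≤ x ∧ (k ≤ 0 ∨ x ≤ 1 / k) then (1 - k * x) ^ ((1 - k) / k) else 0

/-- The Generalized Pareto distribution with shape `k` and scale `1`. -/
noncomputable def gpdMeasure (k : ℝ) : Measure ℝ :=
  volume.withDensity fun x => ENNReal.ofReal (gpdPdf k x)

/-- The joint law of an i.i.d. sample of size `n` from the GPD with shape `k`, scale `1`. -/
noncomputable def iidGPD (n : ℕ) (k : ℝ) : Measure (Fin n → ℝ) :=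
  Measure.pi fun _ => gpdMeasure k

/-- Sample maximum. -/
noncomputable def sampleMax {n : ℕ} (x : Fin n → ℝ) : ℝ := ⨆ i, x i

/-- Empirical mean. -/
noncomputable def sampleMean {n : ℕ} (x : Fin n → ℝ) : ℝ := (∑ i, x i) / n

/-- The mean/max statistic `τ_n`. -/
noncomputable def tau {n : ℕ} (x : Fin n → ℝ) : ℝ := sampleMean x / sampleMax x

/-!
By the law of large numbers the mean concentrates at `m`, so `{r * τ ≤ t}` agrees, up to an event
of vanishing probability, with `{r * (m / t) ≤ max}`. The latter has probability
`1 - (1 - P(X ≥ r * (m / t))) ^ n`, and if `P(X ≥ x) ~ c * x ^ (-α)` then the choice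
`r = n ^ (1 / α)` makes this converge to `1 - exp (-c * (t / m) ^ α)`. For the GPD of shape
`k < 0`, `P(X ≥ x) = (1 - k * x) ^ (1 / k)`, so `α = -1 / k` and `c = (-k) ^ (1 / k)`;
integrating this tail gives `m = 1 / (k + 1)`.
-/

open scoped Topology

section Slutsky

variable {ι : Type*} {l : Filter ι} {Ω : ι → Type*} [∀ i, MeasurableSpace (Ω i)]
  {P : ∀ i, Measure (Ω i)} [∀ i, IsFiniteMeasure (P i)]

lemma tendsto_measureReal_of_iff_off_negligible {A B N : ∀ i, Set (Ω i)} {p : ℝ}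
    (hB : Tendsto (fun i => (P i).real (B i)) l (𝓝 p))
    (hN : Tendsto (fun i => (P i).real (N i)) l (𝓝 0))
    (hAB : ∀ᶠ i in l, ∀ ω ∉ N i, (ω ∈ A i ↔ ω ∈ B i)) :
    Tendsto (fun i => (P i).real (A i)) l (𝓝 p) := by
  have hlower := hB.sub hN
  have hupper := hB.add hN
  rw [sub_zero] at hlower
  rw [add_zero] at hupper
  refine tendsto_of_tendsto_of_tendsto_of_le_of_le' hlower hupper ?_ ?_
  · filter_upwards [hAB] with i hi
    have hsub : B i ⊆ A i ∪ N i := fun ω hω =>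
      or_iff_not_imp_right.2 fun hN => (hi ω hN).2 hω
    exact sub_le_iff_le_add.2 ((measureReal_mono hsub).trans (measureReal_union_le _ _))
  · filter_upwards [hAB] with i hi
    have hsub : A i ⊆ B i ∪ N i := fun ω hω =>
      or_iff_not_imp_right.2 fun hN => (hi ω hN).1 hω
    exact (measureReal_mono hsub).trans (measureReal_union_le _ _)

lemma tendsto_measureReal_le_of_tendsto_const {U V : ∀ i, Ω i → ℝ} {m : ℝ} {G : ℝ → ℝ}
    (hU : ∀ ε, 0 < ε → Tendsto (fun i => (P i).real {ω | ε ≤ |U i ω - m|}) l (𝓝 0))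
    (hG : ContinuousAt G m)
    (hV : ∀ᶠ a in 𝓝 m, Tendsto (fun i => (P i).real {ω | a ≤ V i ω}) l (𝓝 (G a))) :
    Tendsto (fun i => (P i).real {ω | U i ω ≤ V i ω}) l (𝓝 (G m)) := by
  have hadd : Tendsto (fun ε => m + ε) (𝓝[>] 0) (𝓝 m) :=
    ((continuous_const_add m).tendsto' 0 m (add_zero m)).mono_left nhdsWithin_le_nhds
  have hsub : Tendsto (fun ε => m - ε) (𝓝[>] 0) (𝓝 m) :=
    ((continuous_sub_left m).tendsto' 0 m (sub_zero m)).mono_left nhdsWithin_le_nhds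
  refine tendsto_order.2 ⟨fun b hb => ?_, fun b hb => ?_⟩
  · obtain ⟨ε, ⟨hGε, hVε⟩, hε⟩ := ((hadd.eventually
      ((hG.eventually_const_lt hb).and hV)).and self_mem_nhdsWithin).exists
    have hlim := hVε.sub (hU ε hε)
    rw [sub_zero] at hlim
    filter_upwards [hlim.eventually_const_lt hGε] with i hi
    have hcover : {ω | m + ε ≤ V i ω} ⊆ {ω | U i ω ≤ V i ω} ∪ {ω | ε ≤ |U i ω - m|} :=
      fun ω (hω : m + ε ≤ V i ω) => or_iff_not_imp_right.2 fun hdev => by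
        have hclose : U i ω - m < ε := (abs_lt.1 (not_le.1 hdev)).2
        exact show U i ω ≤ V i ω by linarith
    exact hi.trans_le (sub_le_iff_le_add.2
      ((measureReal_mono hcover).trans (measureReal_union_le _ _)))
  · obtain ⟨ε, ⟨hGε, hVε⟩, hε⟩ := ((hsub.eventually
      ((hG.eventually_lt_const hb).and hV)).and self_mem_nhdsWithin).exists
    have hlim := hVε.add (hU ε hε)
    rw [add_zero] at hlim
    filter_upwards [hlim.eventually_lt_const hGε] with i hi
    have hcover : {ω | U i ω ≤ V i ω} ⊆ {ω | m - ε ≤ V i ω} ∪ {ω | ε ≤ |U i ω - m|} :=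
      fun ω (hω : U i ω ≤ V i ω) => or_iff_not_imp_right.2 fun hdev => by
        have hclose : -ε < U i ω - m := (abs_lt.1 (not_le.1 hdev)).1
        exact show m - ε ≤ V i ω by linarith
    exact ((measureReal_mono hcover).trans (measureReal_union_le _ _)).trans_lt hi

end Slutsky

section SampleStatistics

variable {n : ℕ}

lemma le_sampleMax (x : Fin n → ℝ) (i : Fin n) : x i ≤ sampleMax x :=
  le_ciSup (Set.finite_range x).bddAbove i

lemma sampleMax_lt_iff [NeZero n] {x : Fin n → ℝ} {y : ℝ} :
    sampleMax x < y ↔ ∀ i, x i < y := by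
  refine ⟨fun h i => (le_sampleMax x i).trans_lt h, fun h => ?_⟩
  obtain ⟨i, hi⟩ := exists_eq_ciSup_of_finite (f := x)
  exact hi.symm.trans_lt (h i)

lemma sampleMean_le_sampleMax [NeZero n] (x : Fin n → ℝ) : sampleMean x ≤ sampleMax x := by
  have hn : (0 : ℝ) < n := Nat.cast_pos.2 (NeZero.pos n)
  rw [sampleMean, div_le_iff₀ hn, mul_comm]
  simpa using Finset.sum_le_card_nsmul Finset.univ x (sampleMax x) fun i _ => le_sampleMax x i

lemma mul_tau_le_iff [NeZero n] {x : Fin n → ℝ} {r t : ℝ} (hr : 0 < r)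
    (hx : 0 < sampleMean x) : r * tau x ≤ t ↔ sampleMean x ≤ t / r * sampleMax x := by
  have hmax : 0 < sampleMax x := hx.trans_le (sampleMean_le_sampleMax x)
  rw [tau, ← le_div_iff₀' hr, div_le_iff₀ hmax]

end SampleStatistics

section IIDSample

variable {μ : Measure ℝ} [IsProbabilityMeasure μ]

lemma ae_tendsto_mean_infinitePi (hμ : Integrable (fun x : ℝ => x) μ) :
    ∀ᵐ ω ∂Measure.infinitePi fun _ : ℕ => μ,
      Tendsto (fun n : ℕ => (∑ i ∈ Finset.range n, ω i) / (n : ℝ)) atTop (𝓝 (∫ x, x ∂μ)) := by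
  set P : Measure (ℕ → ℝ) := Measure.infinitePi fun _ => μ
  have heval : ∀ i, MeasurePreserving (Function.eval i) P μ :=
    measurePreserving_eval_infinitePi fun _ => μ
  have hindep : iIndepFun (fun (i : ℕ) (ω : ℕ → ℝ) => ω i) P :=
    iIndepFun_infinitePi (X := fun _ x => x) fun _ => measurable_id
  have hlaw := strong_law_ae_real (μ := P) (fun i ω => ω i)
    ((heval 0).integrable_comp_of_integrable hμ) (fun i j hij => hindep.indepFun hij)
    fun i => ⟨(heval i).aemeasurable, (heval 0).aemeasurable,
      (heval i).map_eq.trans (heval 0).map_eq.symm⟩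
  have hmean : ∫ ω, ω 0 ∂P = ∫ x, x ∂μ := by
    rw [← (heval 0).map_eq, integral_map (heval 0).aemeasurable (by fun_prop)]
  rwa [hmean] at hlaw

lemma tendsto_measureReal_pi_le_abs_sampleMean_sub (hμ : Integrable (fun x => x) μ) {ε : ℝ}
    (hε : 0 < ε) :
    Tendsto (fun n : ℕ => (Measure.pi fun _ : Fin n => μ).real
      {x | ε ≤ |sampleMean x - ∫ x, x ∂μ|}) atTop (𝓝 0) := by
  have hlaw := tendstoInMeasure_of_tendsto_ae
    (fun n => (by fun_prop : AEStronglyMeasurable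
      (fun ω : ℕ → ℝ => (∑ i ∈ Finset.range n, ω i) / (n : ℝ)) _))
    (ae_tendsto_mean_infinitePi hμ)
  refine (tendstoInMeasure_iff_measureReal_dist.1 hlaw ε hε).congr fun n => ?_
  have hmap : (Measure.infinitePi fun _ : ℕ => μ).map (fun ω (i : Fin n) => ω i) =
      Measure.pi fun _ => μ := by
    rw [Measure.map_infinitePi_infinitePi_of_inj (P := fun _ : ℕ => μ) Fin.val_injective,
      Measure.infinitePi_eq_pi]
  have hmeas : MeasurableSet {x : Fin n → ℝ | ε ≤ |sampleMean x - ∫ x, x ∂μ|} := by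
    unfold sampleMean
    exact measurableSet_le (by fun_prop) (by fun_prop)
  rw [← hmap, map_measureReal_apply (by fun_prop) hmeas]
  simp [sampleMean, Real.dist_eq, Finset.sum_range]

lemma measureReal_pi_le_sampleMax (μ : Measure ℝ) [IsProbabilityMeasure μ] (n : ℕ) [NeZero n]
    (y : ℝ) :
    (Measure.pi fun _ : Fin n => μ).real {x | y ≤ sampleMax x} =
      1 - (1 - μ.real (Set.Ici y)) ^ n := by
  have hset : {x : Fin n → ℝ | y ≤ sampleMax x} = (Set.univ.pi fun _ => Set.Iio y)ᶜ := by
    ext x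
    simp [← not_lt, sampleMax_lt_iff]
  rw [hset, probReal_compl_eq_one_sub (MeasurableSet.univ_pi fun _ => measurableSet_Iio),
    ← probReal_compl_eq_one_sub measurableSet_Ici, Set.compl_Ici]
  simp [Measure.real, Measure.pi_pi]

lemma tendsto_measureReal_pi_le_sampleMax {b : ℕ → ℝ} {r : ℝ}
    (hb : Tendsto (fun n => n * μ.real (Set.Ici (b n))) atTop (𝓝 r)) :
    Tendsto (fun n => (Measure.pi fun _ : Fin n => μ).real {x | b n ≤ sampleMax x}) atTop
      (𝓝 (1 - Real.exp (-r))) := by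
  have hpow := (Real.tendsto_one_add_pow_exp_of_tendsto
    (g := fun n => -μ.real (Set.Ici (b n))) (by simpa only [mul_neg] using hb.neg)).const_sub 1
  refine hpow.congr' ?_
  filter_upwards [eventually_ne_atTop 0] with n hn
  have : NeZero n := ⟨hn⟩
  rw [measureReal_pi_le_sampleMax, ← sub_eq_add_neg]

end IIDSample

section ParetoTail

variable {μ : Measure ℝ} {α c : ℝ}

lemma tendsto_mul_measureReal_Ici_of_tail (hα : 0 < α)
    (htail : Tendsto (fun x => x ^ α * μ.real (Set.Ici x)) atTop (𝓝 c)) {s : ℝ} (hs : 0 < s) :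
    Tendsto (fun n : ℕ => n * μ.real (Set.Ici ((n : ℝ) ^ (1 / α) * s))) atTop
      (𝓝 (c * s ^ (-α))) := by
  have hscale : Tendsto (fun n : ℕ => (n : ℝ) ^ (1 / α) * s) atTop atTop :=
    ((tendsto_rpow_atTop (one_div_pos.2 hα)).comp tendsto_natCast_atTop_atTop).atTop_mul_const hs
  refine ((htail.comp hscale).mul_const (s ^ (-α))).congr fun n => ?_
  have hcancel : s ^ α * s ^ (-α) = 1 := by rw [← Real.rpow_add hs, add_neg_cancel, Real.rpow_zero]
  have hroot : ((n : ℝ) ^ (1 / α) * s) ^ α = n * s ^ α := by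
    rw [Real.mul_rpow (by positivity) hs.le, ← Real.rpow_mul n.cast_nonneg,
      one_div_mul_cancel hα.ne', Real.rpow_one]
  simp only [Function.comp_apply, hroot]
  linear_combination n * μ.real (Set.Ici ((n : ℝ) ^ (1 / α) * s)) * hcancel

lemma tendsto_measureReal_pi_sampleMean_le_mul_sampleMax [IsProbabilityMeasure μ]
    (hmean : 0 < ∫ x, x ∂μ) (hα : 0 < α)
    (htail : Tendsto (fun x => x ^ α * μ.real (Set.Ici x)) atTop (𝓝 c)) {t : ℝ} (ht : 0 < t) :
    Tendsto (fun n : ℕ => (Measure.pi fun _ : Fin n => μ).real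
        {x | sampleMean x ≤ t / (n : ℝ) ^ (1 / α) * sampleMax x}) atTop
      (𝓝 (1 - Real.exp (-(c * (t / ∫ x, x ∂μ) ^ α)))) := by
  have hint : Integrable (fun x => x) μ := .of_integral_ne_zero hmean.ne'
  set m := ∫ x, x ∂μ
  set G : ℝ → ℝ := fun a => 1 - Real.exp (-(c * (a / t) ^ (-α))) with hG
  have hGm : G m = 1 - Real.exp (-(c * (t / m) ^ α)) := by
    simp only [hG]
    rw [Real.rpow_neg (by positivity), ← Real.inv_rpow (by positivity), inv_div]
  have hGcont : ContinuousAt G m := by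
    have hbase : m / t ≠ 0 := (div_pos hmean ht).ne'
    fun_prop (disch := exact Or.inl hbase)
  rw [← hGm]
  refine tendsto_measureReal_le_of_tendsto_const
    (fun ε hε => tendsto_measureReal_pi_le_abs_sampleMean_sub hint hε) hGcont ?_
  filter_upwards [lt_mem_nhds hmean] with a ha
  refine (tendsto_measureReal_pi_le_sampleMax
    (tendsto_mul_measureReal_Ici_of_tail hα htail (div_pos ha ht))).congr' ?_
  filter_upwards [eventually_gt_atTop 0] with n hn
  have hpow : 0 < (n : ℝ) ^ (1 / α) := by positivity
  congr 2 with x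
  rw [← mul_div_assoc, div_le_iff₀ ht, div_mul_eq_mul_div, le_div_iff₀ hpow, mul_comm a,
    mul_comm t]

theorem tau_asymptotics_gpd_neg_shape_general [IsProbabilityMeasure μ] {m : ℝ}
    (hmean : ∫ x, x ∂μ = m) (hm : 0 < m) (hα : 0 < α)
    (htail : Tendsto (fun x => x ^ α * μ.real (Set.Ici x)) atTop (𝓝 c)) {t : ℝ} (ht : 0 < t) :
    Tendsto (fun n : ℕ => (Measure.pi fun _ : Fin n => μ) {x | (n : ℝ) ^ (1 / α) * tau x ≤ t})
      atTop (𝓝 (ENNReal.ofReal (1 - Real.exp (-(c * (t / m) ^ α))))) := by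
  subst hmean
  have hint : Integrable (fun x => x) μ := .of_integral_ne_zero hm.ne'
  suffices hreal : Tendsto (fun n : ℕ => (Measure.pi fun _ : Fin n => μ).real
      {x | (n : ℝ) ^ (1 / α) * tau x ≤ t}) atTop
      (𝓝 (1 - Real.exp (-(c * (t / ∫ x, x ∂μ) ^ α)))) by
    simpa only [ofReal_measureReal (measure_ne_top _ _)] using ENNReal.tendsto_ofReal hreal
  refine tendsto_measureReal_of_iff_off_negligible
    (tendsto_measureReal_pi_sampleMean_le_mul_sampleMax hm hα htail ht)
    (tendsto_measureReal_pi_le_abs_sampleMean_sub hint hm) ?_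
  filter_upwards [eventually_gt_atTop 0] with n hn x hx
  have : NeZero n := ⟨hn.ne'⟩
  have hpos : 0 < sampleMean x := by linarith [(abs_lt.1 (not_le.1 hx)).1]
  exact mul_tau_le_iff (by positivity) hpos

end ParetoTail

section GPD

variable {k : ℝ}

lemma lintegral_Ici_one_sub_mul_rpow {p y : ℝ} (hk : k < 0) (hp : p < -1)
    (hy : 0 < 1 - k * y) :
    ∫⁻ x in Set.Ici y, ENNReal.ofReal ((1 - k * x) ^ p) =
      ENNReal.ofReal ((1 - k * y) ^ (p + 1) / (k * (p + 1))) := by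
  have hp' : p + 1 < 0 := by linarith
  have hpos : ∀ x ∈ Set.Ici y, 0 < 1 - k * x := fun x hx => by
    nlinarith [Set.mem_Ici.1 hx]
  have hderiv : ∀ x ∈ Set.Ici y,
      HasDerivAt (fun x => -((1 - k * x) ^ (p + 1) / (k * (p + 1)))) ((1 - k * x) ^ p) x := by
    intro x hx
    have hlin : HasDerivAt (fun x => 1 - k * x) (-k) x := by
      simpa using ((hasDerivAt_id x).const_mul k).const_sub 1
    refine ((hlin.rpow_const (Or.inl (hpos x hx).ne')).div_const _).neg.congr_deriv ?_
    rw [add_sub_cancel_right]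
    field_simp [hk.ne, hp'.ne]
  have hnonneg : ∀ x ∈ Set.Ioi y, 0 ≤ (1 - k * x) ^ p := fun x hx =>
    Real.rpow_nonneg (hpos x (Set.Ioi_subset_Ici_self hx)).le _
  have hlim : Tendsto (fun x => -((1 - k * x) ^ (p + 1) / (k * (p + 1)))) atTop (𝓝 0) := by
    have hlin : Tendsto (fun x => 1 - k * x) atTop atTop := by
      simpa [sub_eq_add_neg] using
        tendsto_atTop_add_const_left _ (1 : ℝ) (tendsto_id.const_mul_atTop (neg_pos.2 hk))
    have hpow := (tendsto_rpow_neg_atTop (neg_pos.2 hp')).comp hlin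
    simpa [Function.comp_def] using (hpow.div_const (k * (p + 1))).neg
  rw [setLIntegral_congr Ioi_ae_eq_Ici.symm, ← ofReal_integral_eq_lintegral_ofReal
    (integrableOn_Ioi_deriv_of_nonneg' hderiv hnonneg hlim)
    (ae_restrict_of_forall_mem measurableSet_Ioi hnonneg),
    integral_Ioi_of_hasDerivAt_of_nonneg' hderiv hnonneg hlim, zero_sub, neg_neg]

lemma gpdMeasure_of_neg (hk : k < 0) :
    gpdMeasure k = (volume.restrict (Set.Ici 0)).withDensity
      fun x => ENNReal.ofReal ((1 - k * x) ^ ((1 - k) / k)) := by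
  rw [gpdMeasure, ← withDensity_indicator measurableSet_Ici]
  congr 1 with x
  by_cases hx : 0 ≤ x <;> simp [gpdPdf, hk.ne, hk.le, hx]

lemma gpdMeasure_Ici (hk : k < 0) {y : ℝ} (hy : 0 ≤ y) :
    gpdMeasure k (Set.Ici y) = ENNReal.ofReal ((1 - k * y) ^ (1 / k)) := by
  have hexp : (1 - k) / k = 1 / k - 1 := by rw [sub_div, div_self hk.ne]
  have hexp_lt : 1 / k - 1 < -1 := by linarith [one_div_neg.2 hk]
  rw [gpdMeasure_of_neg hk, withDensity_apply _ measurableSet_Ici,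
    Measure.restrict_restrict measurableSet_Ici, Set.inter_eq_left.2 (Set.Ici_subset_Ici.2 hy),
    hexp, lintegral_Ici_one_sub_mul_rpow hk hexp_lt (by nlinarith), sub_add_cancel,
    mul_one_div_cancel hk.ne, div_one]

lemma ae_nonneg_gpdMeasure (hk : k < 0) : ∀ᵐ x ∂gpdMeasure k, 0 ≤ x := by
  rw [gpdMeasure_of_neg hk]
  exact (withDensity_absolutelyContinuous _ _).ae_le (ae_restrict_mem measurableSet_Ici)

lemma isProbabilityMeasure_gpdMeasure (hk : k < 0) : IsProbabilityMeasure (gpdMeasure k) := by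
  refine ⟨?_⟩
  rw [← measure_congr (eventuallyEq_univ.2 (ae_nonneg_gpdMeasure hk))]
  exact (gpdMeasure_Ici hk le_rfl).trans (by simp)

lemma integral_id_gpdMeasure (hk₁ : -1 < k) (hk₂ : k < 0) :
    ∫ x, x ∂gpdMeasure k = 1 / (k + 1) := by
  have hexp : 1 / k < -1 := by rw [div_lt_iff_of_neg hk₂]; linarith
  have hconst : k * (1 / k + 1) = k + 1 := by field_simp [hk₂.ne]; ring
  have hlintegral : ∫⁻ x, ENNReal.ofReal x ∂gpdMeasure k = ENNReal.ofReal (1 / (k + 1)) := calc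
    _ = ∫⁻ y in Set.Ioi 0, gpdMeasure k (Set.Ici y) :=
      lintegral_eq_lintegral_meas_le _ (ae_nonneg_gpdMeasure hk₂) aemeasurable_id
    _ = ∫⁻ y in Set.Ioi 0, ENNReal.ofReal ((1 - k * y) ^ (1 / k)) :=
      setLIntegral_congr_fun measurableSet_Ioi fun y hy => gpdMeasure_Ici hk₂ (le_of_lt hy)
    _ = ENNReal.ofReal (1 / (k + 1)) := by
      rw [setLIntegral_congr Ioi_ae_eq_Ici, lintegral_Ici_one_sub_mul_rpow hk₂ hexp (by simp),
        hconst, mul_zero, sub_zero, Real.one_rpow]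
  rw [integral_eq_lintegral_of_nonneg_ae (ae_nonneg_gpdMeasure hk₂) (by fun_prop), hlintegral,
    ENNReal.toReal_ofReal (one_div_nonneg.2 (by linarith))]

lemma tendsto_rpow_mul_gpdMeasure_Ici (hk : k < 0) :
    Tendsto (fun x => x ^ (-1 / k) * (gpdMeasure k).real (Set.Ici x)) atTop
      (𝓝 ((-k) ^ (1 / k))) := by
  have hlim : Tendsto (fun x : ℝ => (x⁻¹ - k) ^ (1 / k)) atTop (𝓝 ((-k) ^ (1 / k))) := by
    have hbase := tendsto_inv_atTop_zero (𝕜 := ℝ).sub_const k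
    rw [zero_sub] at hbase
    exact hbase.rpow_const (Or.inl (neg_ne_zero.2 hk.ne))
  refine hlim.congr' ?_
  filter_upwards [eventually_gt_atTop 0] with x hx
  have hbase : 0 ≤ 1 - k * x := by nlinarith
  have hfactor : x⁻¹ - k = x⁻¹ * (1 - k * x) := by field_simp
  rw [measureReal_def, gpdMeasure_Ici hk hx.le, ENNReal.toReal_ofReal (Real.rpow_nonneg hbase _),
    hfactor, Real.mul_rpow (inv_nonneg.2 hx.le) hbase, Real.inv_rpow hx.le, ← Real.rpow_neg hx.le,
    neg_div]

end GPD

/-- For a GPD sample with shape `−1 < k < 0`, `n^{−k}·τ_n` converges in distribution to a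
Weibull variable of shape `−1/k` and scale `−k/(k+1)`: for every `t > 0`,
`P(n^{−k}·τ_n ≤ t) → 1 − exp(−(t·(k+1)/(−k))^{−1/k})`. -/
theorem tau_asymptotics_gpd_neg_shape
    (k : ℝ) (hk₁ : -1 < k) (hk₂ : k < 0) :
    ∀ t : ℝ, 0 < t →
      Tendsto
        (fun n : ℕ => iidGPD n k {x | (n : ℝ) ^ (-k) * tau x ≤ t})
        atTop
        (nhds (ENNReal.ofReal
          (1 - Real.exp (-((t * (k + 1) / (-k)) ^ (-1 / k)))))) := by
  intro t ht
  have := isProbabilityMeasure_gpdMeasure hk₂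
  have hk : 0 < k + 1 := by linarith
  have hscale : 1 / (-1 / k) = -k := by rw [one_div_div, div_neg, div_one]
  have hlimit : (-k) ^ (1 / k) * (t / (1 / (k + 1))) ^ (-1 / k) =
      (t * (k + 1) / (-k)) ^ (-1 / k) := by
    rw [div_div_eq_mul_div, div_one, Real.div_rpow (by positivity) (neg_pos.2 hk₂).le, neg_div,
      Real.rpow_neg (neg_pos.2 hk₂).le, div_inv_eq_mul, mul_comm]
  simpa only [iidGPD, hscale, hlimit] using
    tau_asymptotics_gpd_neg_shape_general (integral_id_gpdMeasure hk₁ hk₂) (one_div_pos.2 hk)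
      (div_pos_of_neg_of_neg neg_one_lt_zero hk₂) (tendsto_rpow_mul_gpdMeasure_Ici hk₂) ht
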